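/- arXiv:1402.4163 — 4 statements merged into one kernel-verified Lean document; each statement's English description precedes it below -/
import Mathlib

section
/- Let φ : ℝ → ℝ be convex with φ(0) = 0. Then sup_{f ∈ AC₀} J(f) = inf_{λ ∈ [0,1]} φ(λ), i.e. the supremum over all f ∈ AC₀ of ( min_{t ∈ [0,1]} f(t) − ∫_0^1 Λ*(f′(u)) du ) equals the infimum of φ over [0,1]. -/
open MeasureTheory

/-- The Legendre transform `Λ*(x) = sup_{λ ∈ ℝ} (λ x - φ(λ))`, with values in `[0, +∞]`
(note that the supremum is nonnegative since `φ 0 = 0`). -/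
noncomputable def legendreTransform (φ : ℝ → ℝ) (x : ℝ) : ENNReal :=
  ⨆ l : ℝ, ENNReal.ofReal (l * x - φ l)

/-- For `f ∈ AC₀` represented by an integrable `g` on `[0,1]` via `f t = ∫_0^t g`,
this is `I(f) = ∫_0^1 Λ*(g(u)) du ∈ [0, +∞]`. -/
noncomputable def rateACZero (φ : ℝ → ℝ) (g : ℝ → ℝ) : ENNReal :=
  ∫⁻ u in Set.Icc (0:ℝ) 1, legendreTransform φ (g u)

/-- `J(f) = min_{t ∈ [0,1]} f(t) - I(f) ∈ [-∞, +∞)`, with `J(f) = -∞` when `I(f) = +∞`,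
for `f ∈ AC₀` given by `f t = ∫_0^t g`. -/
noncomputable def JACZero (φ : ℝ → ℝ) (g : ℝ → ℝ) : EReal :=
  ((sInf ((fun t => ∫ u in (0:ℝ)..t, g u) '' Set.Icc (0:ℝ) 1) : ℝ) : EReal) -
    (rateACZero φ g : EReal)

theorem aux_subgrad (ψ : ℝ → ℝ) (hc : ConvexOn ℝ Set.univ ψ) (h0 : ψ 0 = 0)
    (hpos : ∀ l ∈ Set.Icc (0:ℝ) 1, 0 ≤ ψ l) : ∃ c : ℝ, 0 ≤ c ∧ ∀ l, c * l ≤ ψ l := by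
  have hcross : ∀ l m : ℝ, l < 0 → 0 < m → 0 ≤ m * ψ l - l * ψ m := by
    intro l m hl hm
    have hd : 0 < m - l := by linarith
    have h := hc.2 (Set.mem_univ l) (Set.mem_univ m)
      (show 0 ≤ m / (m - l) by positivity)
      (show 0 ≤ -l / (m - l) from div_nonneg (by linarith) hd.le) (by field_simp; ring)
    simp only [smul_eq_mul] at h
    have e1 : m / (m - l) * l + -l / (m - l) * m = 0 := by field_simp; ring
    have e2 : m / (m - l) * ψ l + -l / (m - l) * ψ m = (m * ψ l - l * ψ m) / (m - l) := by
      field_simp; ring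
    rw [e1, e2, h0] at h
    by_contra hneg
    have := div_neg_of_neg_of_pos (not_le.mp hneg) hd
    linarith
  have hpos' : ∀ l : ℝ, 0 < l → 0 ≤ ψ l := by
    intro l hl
    by_cases h1 : l ≤ 1
    · exact hpos l ⟨hl.le, h1⟩
    · push Not at h1
      have h := hc.2 (Set.mem_univ l) (Set.mem_univ 0)
        (show 0 ≤ 1 / l by positivity) (show 0 ≤ 1 - 1 / l by rw [sub_nonneg, div_le_one hl]; exact h1.le) (by ring)
      simp only [smul_eq_mul, h0, mul_zero, add_zero] at h
      rw [one_div, inv_mul_cancel₀ hl.ne'] at h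
      have h2 := hpos 1 ⟨zero_le_one, le_rfl⟩
      have h3 : 0 ≤ l⁻¹ * ψ l := h2.trans h
      exact nonneg_of_mul_nonneg_right h3 (by positivity)
  have hne : ((fun l => ψ l / l) '' Set.Ioi (0:ℝ)).Nonempty := ⟨_, 1, by simp, rfl⟩
  have hlb : ∀ y ∈ (fun l => ψ l / l) '' Set.Ioi (0:ℝ), 0 ≤ y := by
    rintro y ⟨l, hl, rfl⟩
    exact div_nonneg (hpos' l hl) (le_of_lt hl)
  refine ⟨sInf ((fun l => ψ l / l) '' Set.Ioi (0:ℝ)), le_csInf hne hlb, fun l => ?_⟩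
  rcases lt_trichotomy l 0 with hl | hl | hl
  · have : ψ l / l ≤ sInf ((fun l => ψ l / l) '' Set.Ioi (0:ℝ)) := by
      refine le_csInf hne ?_
      rintro y ⟨m, hm, rfl⟩
      have hm' : 0 < m := hm
      have := hcross l m hl hm'
      show ψ l / l ≤ ψ m / m
      rw [div_le_iff_of_neg hl, div_mul_eq_mul_div, div_le_iff₀ hm']
      linarith
    rwa [div_le_iff_of_neg hl] at this
  · simp [hl, h0]
  · have : sInf ((fun l => ψ l / l) '' Set.Ioi (0:ℝ)) ≤ ψ l / l :=
      csInf_le ⟨0, hlb⟩ ⟨l, hl, rfl⟩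
    rwa [le_div_iff₀ hl] at this

theorem aux_exists (φ : ℝ → ℝ) (hconv : ConvexOn ℝ Set.univ φ) :
    ∃ x ∈ Set.Icc (0:ℝ) 1, (∀ l ∈ Set.Icc (0:ℝ) 1, φ x ≤ φ l) ∧
      ∃ c : ℝ, c * x ≤ 0 ∧ c * x ≤ c ∧ ∀ l, φ x + c * (l - x) ≤ φ l := by
  have hcont : ContinuousOn φ (Set.Icc 0 1) :=
    (hconv.continuousOn isOpen_univ).mono (Set.subset_univ _)
  obtain ⟨x, hx, hmin⟩ := isCompact_Icc.exists_isMinOn (Set.nonempty_Icc.2 zero_le_one) hcont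
  have hmin' : ∀ l ∈ Set.Icc (0:ℝ) 1, φ x ≤ φ l := fun l hl => hmin hl
  refine ⟨x, hx, hmin', ?_⟩
  rcases eq_or_lt_of_le hx.1 with h | h
  · subst h
    obtain ⟨c, hc, H⟩ := aux_subgrad (fun l => φ l - φ 0)
      (hconv.sub (concaveOn_const _ convex_univ)) (by simp)
      (fun l hl => sub_nonneg.2 (hmin' l hl))
    refine ⟨c, by simp, by simpa using hc, fun l => ?_⟩
    have := H l
    linarith
  rcases eq_or_lt_of_le hx.2 with h1 | h1
  · subst h1
    have hcv : ConvexOn ℝ Set.univ (fun l => φ (1 - l) - φ 1) := by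
      refine ⟨convex_univ, fun a _ b _ s t hs ht hst => ?_⟩
      have := hconv.2 (Set.mem_univ (1 - a)) (Set.mem_univ (1 - b)) hs ht hst
      simp only [smul_eq_mul] at this ⊢
      have e : s * (1 - a) + t * (1 - b) = 1 - (s * a + t * b) := by linear_combination hst
      rw [e] at this
      have e2 : s * φ 1 + t * φ 1 = φ 1 := by rw [← add_mul, hst, one_mul]
      linarith
    obtain ⟨c, hc, H⟩ := aux_subgrad _ hcv (by simp)
      (fun l hl => sub_nonneg.2 (hmin' _ ⟨by linarith [hl.2], by linarith [hl.1]⟩))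
    refine ⟨-c, by linarith, by linarith, fun l => ?_⟩
    have := H (1 - l)
    simp only [sub_sub_cancel] at this
    linarith
  · refine ⟨0, by simp, by simp, fun l => ?_⟩
    have hloc : IsLocalMin φ x := hmin.isLocalMin (Icc_mem_nhds h h1)
    have := IsMinOn.of_isLocalMin_of_convex_univ hloc hconv l
    simpa using this

/-- For `φ : ℝ → ℝ` convex with `φ(0) = 0`,
`sup_{f ∈ AC₀} J(f) = inf_{λ ∈ [0,1]} φ(λ)`. -/
theorem sup_J_eq_inf_phi (φ : ℝ → ℝ)
    (hconv : ConvexOn ℝ Set.univ φ) (h0 : φ 0 = 0) :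
    (⨆ (g : ℝ → ℝ) (_ : IntegrableOn g (Set.Icc (0:ℝ) 1)), JACZero φ g) =
      ((⨅ l : Set.Icc (0:ℝ) 1, φ l : ℝ) : EReal) := by
  obtain ⟨x, hx, hmin, c, hc0, hc1, hsub⟩ := aux_exists φ hconv
  have hinf : (⨅ l : Set.Icc (0:ℝ) 1, φ l : ℝ) = φ x := by
    have : Nonempty (Set.Icc (0:ℝ) 1) := ⟨⟨x, hx⟩⟩
    apply le_antisymm
    · exact ciInf_le (f := fun l : Set.Icc (0:ℝ) 1 => φ l)
        ⟨φ x, by rintro _ ⟨l, rfl⟩; exact hmin l l.2⟩ ⟨x, hx⟩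
    · exact le_ciInf fun l => hmin l l.2
  rw [hinf]
  apply le_antisymm
  · refine iSup₂_le fun g hg => ?_
    unfold JACZero
    by_cases htop : rateACZero φ g = ⊤
    · simp [htop]
    have hii : IntervalIntegrable g volume 0 1 := by
      rw [intervalIntegrable_iff_integrableOn_Icc_of_le zero_le_one]; exact hg
    have hbdd : BddBelow ((fun t => ∫ u in (0:ℝ)..t, g u) '' Set.Icc (0:ℝ) 1) := by
      refine (isCompact_Icc.image_of_continuousOn ?_).bddBelow
      have := intervalIntegral.continuousOn_primitive_interval (μ := volume) (f := g)
        (a := 0) (b := 1) (by simpa [Set.uIcc_of_le] using hg)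
      simpa [Set.uIcc_of_le] using this
    set S := (fun t => ∫ u in (0:ℝ)..t, g u) '' Set.Icc (0:ℝ) 1 with hS
    have hm0 : sInf S ≤ 0 := csInf_le hbdd ⟨0, by simp, by simp⟩
    have hm1 : sInf S ≤ ∫ u in (0:ℝ)..1, g u := csInf_le hbdd ⟨1, by simp, rfl⟩
    have hI : x * (∫ u in (0:ℝ)..1, g u) - φ x ≤ (rateACZero φ g).toReal := by
      have e : x * (∫ u in (0:ℝ)..1, g u) - φ x = ∫ u in Set.Icc (0:ℝ) 1, (x * g u - φ x) := by
        rw [integral_sub (hg.const_mul x) (by simp), integral_const_mul,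
          intervalIntegral.integral_of_le zero_le_one, integral_Icc_eq_integral_Ioc]
        simp
      rw [e]
      have hint : Integrable (fun u => x * g u - φ x) (volume.restrict (Set.Icc (0:ℝ) 1)) :=
        (hg.const_mul x).sub (by simp)
      have h1 : ∫⁻ u in Set.Icc (0:ℝ) 1, ENNReal.ofReal (x * g u - φ x) ≤ rateACZero φ g :=
        lintegral_mono fun u => le_iSup (fun l => ENNReal.ofReal (l * g u - φ l)) x
      rw [integral_eq_lintegral_pos_part_sub_lintegral_neg_part hint]
      have := ENNReal.toReal_mono htop h1
      have h2 : 0 ≤ (∫⁻ u in Set.Icc (0:ℝ) 1, ENNReal.ofReal (-(x * g u - φ x))).toReal :=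
        ENNReal.toReal_nonneg
      linarith
    rw [← EReal.coe_ennreal_toReal htop, ← EReal.coe_sub, EReal.coe_le_coe_iff]
    nlinarith [hx.1, hx.2, mul_nonneg hx.1 (sub_nonneg.2 hm1),
      mul_nonneg (sub_nonneg.2 hx.2) (sub_nonneg.2 hm0)]
  · have hgc : IntegrableOn (fun _ : ℝ => c) (Set.Icc (0:ℝ) 1) := by simp
    refine le_iSup_of_le (fun _ => c) (le_iSup_of_le hgc ?_)
    unfold JACZero
    have hr : rateACZero φ (fun _ => c) ≤ ENNReal.ofReal (c * x - φ x) := by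
      unfold rateACZero legendreTransform
      simp only [lintegral_const, Measure.restrict_apply MeasurableSet.univ, Set.univ_inter,
        Real.volume_Icc, sub_zero, ENNReal.ofReal_one, mul_one]
      exact iSup_le fun l => ENNReal.ofReal_le_ofReal (by linarith [hsub l])
    have hnn : 0 ≤ c * x - φ x := by
      have := hsub 0
      rw [h0] at this
      linarith
    have hm : c * x ≤ sInf ((fun t => ∫ u in (0:ℝ)..t, (fun _ => c) u) '' Set.Icc (0:ℝ) 1) := by
      refine le_csInf ⟨_, 0, by simp, rfl⟩ ?_
      rintro _ ⟨t, ht, rfl⟩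
      simp only [intervalIntegral.integral_const, smul_eq_mul, sub_zero]
      nlinarith [mul_nonneg ht.1 (sub_nonneg.2 hc1), mul_nonneg (sub_nonneg.2 ht.2) (neg_nonneg.2 hc0)]
    have htop : rateACZero φ (fun _ => c) ≠ ⊤ := ne_top_of_le_ne_top ENNReal.ofReal_ne_top hr
    have hr' := ENNReal.toReal_le_of_le_ofReal hnn hr
    rw [← EReal.coe_ennreal_toReal htop, ← EReal.coe_sub, EReal.coe_le_coe_iff]
    linarith
end

section
/- Let φ : ℝ → ℝ be convex with φ(0) = 0. Then for every f ∈ AC₀ and every t* ∈ [0,1] one has J(f) ≤ φ(t*); consequently sup_{f ∈ AC₀} J(f) ≤ inf_{λ ∈ [0,1]} φ(λ). -/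
open MeasureTheory

theorem aux_J_le (φ : ℝ → ℝ) (g : ℝ → ℝ) (hg : IntegrableOn g (Set.Icc (0:ℝ) 1))
    (t : ℝ) (ht : t ∈ Set.Icc (0:ℝ) 1) : JACZero φ g ≤ ((φ t : ℝ) : EReal) := by
  unfold JACZero
  by_cases hI : rateACZero φ g = ⊤
  · rw [hI]; simp
  have hint : IntegrableOn (fun u => t * g u - φ t) (Set.Icc (0:ℝ) 1) :=
    (hg.const_mul t).sub (integrableOn_const (by simp))
  have h1 : ∫ u in Set.Icc (0:ℝ) 1, (t * g u - φ t) ≤ (rateACZero φ g).toReal := by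
    rw [integral_eq_lintegral_pos_part_sub_lintegral_neg_part hint]
    refine (sub_le_self _ ENNReal.toReal_nonneg).trans ?_
    refine ENNReal.toReal_mono hI ?_
    unfold rateACZero
    refine lintegral_mono fun u => ?_
    exact le_iSup (fun l : ℝ => ENNReal.ofReal (l * g u - φ l)) t
  have h2 : ∫ u in Set.Icc (0:ℝ) 1, (t * g u - φ t) = t * (∫ u in (0:ℝ)..1, g u) - φ t := by
    rw [integral_sub (hg.const_mul t) (integrableOn_const (by simp)), integral_const_mul,
      intervalIntegral.integral_of_le zero_le_one, integral_Icc_eq_integral_Ioc]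
    simp
  have hbdd : BddBelow ((fun t => ∫ u in (0:ℝ)..t, g u) '' Set.Icc (0:ℝ) 1) := by
    refine (isCompact_Icc.image_of_continuousOn ?_).bddBelow
    have hg2 : IntegrableOn g (Set.uIcc (0:ℝ) 1) := by rwa [Set.uIcc_of_le zero_le_one]
    have h := intervalIntegral.continuousOn_primitive_interval hg2
    rwa [Set.uIcc_of_le zero_le_one] at h
  have hm0 := csInf_le hbdd ⟨0, by simp, rfl⟩
  have hm1 := csInf_le hbdd ⟨1, by simp, rfl⟩
  simp only [intervalIntegral.integral_same] at hm0
  set m := sInf ((fun t => ∫ u in (0:ℝ)..t, g u) '' Set.Icc (0:ℝ) 1)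
  rw [← ENNReal.ofReal_toReal hI, EReal.coe_ennreal_ofReal, max_eq_left ENNReal.toReal_nonneg,
    ← EReal.coe_sub, EReal.coe_le_coe_iff]
  rw [h2] at h1
  have h3 := mul_le_mul_of_nonneg_left hm1 ht.1
  have h4 : m ≤ t * m := by nlinarith [ht.2]
  simp only at h3
  linarith

/-- For `φ : ℝ → ℝ` convex with `φ(0) = 0`, every `f ∈ AC₀` and `t* ∈ [0,1]` satisfy
`J(f) ≤ φ(t*)`; consequently `sup_{f ∈ AC₀} J(f) ≤ inf_{λ ∈ [0,1]} φ(λ)`. -/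
theorem J_le_phi_and_sup_J_le_inf_phi (φ : ℝ → ℝ)
    (hconv : ConvexOn ℝ Set.univ φ) (h0 : φ 0 = 0) :
    (∀ g : ℝ → ℝ, IntegrableOn g (Set.Icc (0:ℝ) 1) →
      ∀ tstar ∈ Set.Icc (0:ℝ) 1, JACZero φ g ≤ ((φ tstar : ℝ) : EReal)) ∧
    (⨆ (g : ℝ → ℝ) (_ : IntegrableOn g (Set.Icc (0:ℝ) 1)), JACZero φ g) ≤
      ((⨅ l : Set.Icc (0:ℝ) 1, φ l : ℝ) : EReal) := by
  refine ⟨fun g hg t ht => aux_J_le φ g hg t ht, ?_⟩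
  refine iSup₂_le fun g hg => ?_
  have h := aux_J_le φ g hg
  generalize JACZero φ g = x at h
  induction x using EReal.rec with
  | bot => exact bot_le
  | top => exact absurd (h 0 (by simp)) (by simp)
  | coe x =>
    have : Nonempty (Set.Icc (0:ℝ) 1) := ⟨⟨0, by simp⟩⟩
    rw [EReal.coe_le_coe_iff]
    exact le_ciInf fun l => EReal.coe_le_coe_iff.1 (h l l.2)
end

section
/- Let a_1, a_2, … be strictly positive real numbers, and define q_0 := 0 and q_i := a_i / (1 + a_i − q_{i−1}) for i ≥ 1 (inductively, 0 ≤ q_{i−1} < 1 so the denominator is positive and 0 < q_i < 1). Then for every n ≥ 0, Π_{i=1}^{n} q_i = ( Σ_{r=0}^{n} Π_{j=1}^{r} a_j^{−1} )^{−1}, where empty products equal 1. -/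
/-- For strictly positive reals `a_1, a_2, …`, with `q_0 = 0` and
`q_i = a_i / (1 + a_i - q_{i-1})`, one has
`∏_{i=1}^n q_i = (∑_{r=0}^n ∏_{j=1}^r a_j⁻¹)⁻¹` for every `n ≥ 0`. -/
theorem birth_death_hitting_product (a q : ℕ → ℝ)
    (ha : ∀ i, 1 ≤ i → 0 < a i)
    (hq0 : q 0 = 0)
    (hq : ∀ i : ℕ, q (i + 1) = a (i + 1) / (1 + a (i + 1) - q i)) :
    ∀ n : ℕ,
      ∏ i ∈ Finset.Icc 1 n, q i =
        (∑ r ∈ Finset.range (n + 1), ∏ j ∈ Finset.Icc 1 r, (a j)⁻¹)⁻¹ := by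
  set P : ℕ → ℝ := fun r => ∏ j ∈ Finset.Icc 1 r, (a j)⁻¹ with hP
  set S : ℕ → ℝ := fun n => ∑ r ∈ Finset.range (n + 1), P r with hS
  have hPs : ∀ n, P (n + 1) = P n * (a (n + 1))⁻¹ := fun n =>
    Finset.prod_Icc_succ_top (by omega) _
  have hSs : ∀ n, S (n + 1) = S n + P (n + 1) := fun n => Finset.sum_range_succ _ _
  have hP0 : P 0 = 1 := by simp [hP]
  have hS0 : S 0 = 1 := by simp [hS, hP0]
  have hPpos : ∀ n, 0 < P n := fun n => Finset.prod_pos fun j hj =>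
    inv_pos.mpr (ha j (Finset.mem_Icc.mp hj).1)
  have hSpos : ∀ n, 0 < S n := fun n =>
    Finset.sum_pos (fun r _ => hPpos r) ⟨0, by simp⟩
  have hstep : ∀ n, q n = 1 - P n / S n → q (n + 1) = S n / S (n + 1) := by
    intro n h
    have h1 := ha (n + 1) (by omega)
    have h2 := hSpos n
    have h3 := hSpos (n + 1)
    have h4 : 1 + a (n + 1) - q n = a (n + 1) * S (n + 1) / S n := by
      rw [h, hSs, hPs]
      field_simp
      ring
    rw [hq, h4]
    field_simp
  have hqn : ∀ n, q n = 1 - P n / S n := by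
    intro n
    induction n with
    | zero => simp [hq0, hP0, hS0]
    | succ n ih =>
      have h3 := hSpos (n + 1)
      rw [hstep n ih, eq_sub_iff_add_eq, ← add_div, ← hSs, div_self h3.ne']
  intro n
  change _ = (S n)⁻¹
  induction n with
  | zero => simp [hS0]
  | succ n ih =>
    have h2 := hSpos n
    have h3 := hSpos (n + 1)
    rw [Finset.prod_Icc_succ_top (by omega), ih, hstep n (hqn n)]
    field_simp
end

section
/- Let a_1, a_2, … be real numbers with a_i ≥ 1 for every i, and define q_0 := 0 and q_i := a_i / (1 + a_i − q_{i−1}) for i ≥ 1. Then for every n ≥ 0, Π_{i=1}^{n} q_i ≥ 1/(n+1). -/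
/-- If `a_i ≥ 1` for every `i`, `q_0 = 0` and `q_i = a_i / (1 + a_i - q_{i-1})`,
then `∏_{i=1}^n q_i ≥ 1/(n+1)` for every `n ≥ 0`. -/
theorem birth_death_product_lower_bound (a q : ℕ → ℝ)
    (ha : ∀ i, 1 ≤ i → 1 ≤ a i)
    (hq0 : q 0 = 0)
    (hq : ∀ i : ℕ, q (i + 1) = a (i + 1) / (1 + a (i + 1) - q i)) :
    ∀ n : ℕ, 1 / (n + 1 : ℝ) ≤ ∏ i ∈ Finset.Icc 1 n, q i := by
  have key : ∀ n : ℕ, (n : ℝ) / (n + 1) ≤ q n ∧ q n < 1 := by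
    intro n
    induction n with
    | zero => simp [hq0]
    | succ k ih =>
      obtain ⟨h1, h2⟩ := ih
      have hA := ha (k + 1) (by omega)
      have hk : (0 : ℝ) ≤ k := Nat.cast_nonneg k
      have hd : 0 < 1 + a (k + 1) - q k := by linarith
      rw [div_le_iff₀ (by positivity)] at h1
      rw [hq k]
      constructor
      · push_cast
        rw [div_le_div_iff₀ (by positivity) hd]
        nlinarith
      · rw [div_lt_one hd]
        linarith
  intro n
  induction n with
  | zero => simp
  | succ k ih =>
    rw [Finset.prod_Icc_succ_top (by omega)]
    have h1 := (key (k + 1)).1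
    have hk : (0 : ℝ) ≤ k := Nat.cast_nonneg k
    calc 1 / (((k + 1 : ℕ) : ℝ) + 1)
        = 1 / ((k : ℝ) + 1) * (((k + 1 : ℕ) : ℝ) / (((k + 1 : ℕ) : ℝ) + 1)) := by
          push_cast
          field_simp
      _ ≤ _ := mul_le_mul ih h1 (by positivity) (le_trans (by positivity) ih)
end
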